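/- Fix α > -1 and ξ₀ < min(j_α, j_{α+1}). Then uniformly for 0 < ξ < ξ₀, the ratio K_Be(μ, ξ²)/J_α(ξ) is O(μ^{α/2}) as μ ranges over (0,1] and O(μ^{-1/4}) for μ ≥ 1. -/

import Mathlib

open MeasureTheory Real Set

/-- Bessel function of the first kind of order `α`. -/
noncomputable def besselJ (α : ℝ) (x : ℝ) : ℝ :=
  ∑' m : ℕ, ((-1 : ℝ) ^ m / (m.factorial * Real.Gamma ((m : ℝ) + α + 1))) *
    (x / 2) ^ (2 * (m : ℝ) + α)

/-- The first positive zero of the Bessel function `J_α`. -/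
noncomputable def besselJZero (α : ℝ) : ℝ :=
  sInf {x : ℝ | 0 < x ∧ besselJ α x = 0}

/-- The Bessel kernel, via its integral representation. -/
noncomputable def besselKernel (α lam mu : ℝ) : ℝ :=
  (1 / 4) * ∫ ρ in (0:ℝ)..1, besselJ α (Real.sqrt (ρ * lam)) * besselJ α (Real.sqrt (ρ * mu))

noncomputable def bF (β t : ℝ) : ℝ :=
  ∑' m : ℕ, ((-1 : ℝ) ^ m / (m.factorial * Real.Gamma ((m : ℝ) + β + 1))) * t ^ m

lemma gamma_lower (β : ℝ) (hβ : -1 < β) :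
    ∃ c > (0:ℝ), ∀ m : ℕ, c ≤ Real.Gamma ((m : ℝ) + β + 1) := by
  have h0 : 0 < Real.Gamma (β + 1) := Real.Gamma_pos_of_pos (by linarith)
  have h1 : 0 < Real.Gamma (β + 1 + 1) := Real.Gamma_pos_of_pos (by linarith)
  refine ⟨min (Real.Gamma (β + 1)) (Real.Gamma (β + 1 + 1)), lt_min h0 h1, ?_⟩
  have key : ∀ m : ℕ, Real.Gamma (β + 1 + 1) ≤ Real.Gamma (((m + 1 : ℕ) : ℝ) + β + 1) := by
    intro m
    induction m with
    | zero => apply le_of_eq; congr 1; push_cast; ring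
    | succ k ih =>
      have hk : (0:ℝ) ≤ k := Nat.cast_nonneg k
      have e : (((k + 1 + 1 : ℕ) : ℝ) + β + 1) = (((k + 1 : ℕ) : ℝ) + β + 1) + 1 := by
        push_cast; ring
      rw [e, Real.Gamma_add_one (s := ((k + 1 : ℕ) : ℝ) + β + 1) (by push_cast; linarith)]
      have : (1:ℝ) ≤ ((k + 1 : ℕ) : ℝ) + β + 1 := by push_cast; linarith
      nlinarith
  intro m
  cases m with
  | zero => refine (min_le_left _ _).trans (le_of_eq ?_); congr 1; push_cast; ring
  | succ k => exact (min_le_right _ _).trans (key k)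

lemma coef_bound (β : ℝ) (hβ : -1 < β) :
    ∃ K > (0:ℝ), ∀ m : ℕ,
      |(-1 : ℝ) ^ m / (m.factorial * Real.Gamma ((m : ℝ) + β + 1))| ≤ K / m.factorial := by
  obtain ⟨c, hc, h⟩ := gamma_lower β hβ
  refine ⟨1 / c, by positivity, fun m => ?_⟩
  have hm : (0:ℝ) < m.factorial := by positivity
  have hG : 0 < Real.Gamma ((m : ℝ) + β + 1) := lt_of_lt_of_le hc (h m)
  rw [abs_div, abs_pow, abs_neg, abs_one, one_pow, abs_of_pos (by positivity), div_div]
  apply one_div_le_one_div_of_le (by positivity)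
  nlinarith [h m]

lemma bF_summable (β : ℝ) (hβ : -1 < β) (t : ℝ) : Summable (fun m : ℕ =>
    ((-1 : ℝ) ^ m / (m.factorial * Real.Gamma ((m : ℝ) + β + 1))) * t ^ m) := by
  obtain ⟨K, hK, h⟩ := coef_bound β hβ
  refine Summable.of_norm_bounded (g := fun m : ℕ => K * (|t| ^ m / m.factorial))
    ((Real.summable_pow_div_factorial |t|).mul_left K) (fun m => ?_)
  rw [Real.norm_eq_abs, abs_mul, abs_pow]
  calc _ ≤ K / m.factorial * |t| ^ m := by gcongr; exact h m
    _ = _ := by ring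

lemma bF_hasDerivAt (β : ℝ) (hβ : -1 < β) (t : ℝ) :
    HasDerivAt (bF β) (-bF (β + 1) t) t := by
  obtain ⟨K, hK, h⟩ := coef_bound β hβ
  set R := |t| + 1 with hR
  have hR0 : 0 < R := by positivity
  have hsum : Summable (fun m : ℕ => K / m.factorial * (m * R ^ (m - 1))) := by
    rw [← summable_nat_add_iff 1]
    refine ((Real.summable_pow_div_factorial R).mul_left K).congr (fun m => ?_)
    have : (m.factorial : ℝ) ≠ 0 := by positivity
    rw [Nat.factorial_succ]; push_cast
    have : (m : ℝ) + 1 ≠ 0 := by positivity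
    field_simp
  have hmem : t ∈ Ioo (-R) R := by
    exact abs_lt.1 (by linarith)
  have := hasDerivAt_tsum_of_isPreconnected (g := fun (m : ℕ) (y : ℝ) =>
      ((-1 : ℝ) ^ m / (m.factorial * Real.Gamma ((m : ℝ) + β + 1))) * y ^ m)
      (g' := fun (m : ℕ) (y : ℝ) =>
      ((-1 : ℝ) ^ m / (m.factorial * Real.Gamma ((m : ℝ) + β + 1))) * (m * y ^ (m - 1)))
      hsum isOpen_Ioo isPreconnected_Ioo
      (fun m y hy => (hasDerivAt_pow m y).const_mul _)
      (fun m y hy => by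
        have hy' : |y| ≤ R := (abs_lt.2 hy).le
        rw [Real.norm_eq_abs, abs_mul, abs_mul, abs_pow, Nat.abs_cast]
        gcongr
        exact h m) hmem (bF_summable β hβ t) hmem
  refine this.congr_deriv ?_
  have hs : Summable (fun m : ℕ =>
      ((-1 : ℝ) ^ m / (m.factorial * Real.Gamma ((m : ℝ) + β + 1))) * (m * t ^ (m - 1))) := by
    refine Summable.of_norm_bounded hsum (fun m => ?_)
    have hy' : |t| ≤ R := by linarith
    rw [Real.norm_eq_abs, abs_mul, abs_mul, abs_pow, Nat.abs_cast]
    gcongr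
    exact h m
  rw [hs.tsum_eq_zero_add, bF, ← tsum_neg]
  simp only [Nat.cast_zero, zero_mul, mul_zero, zero_add]
  refine tsum_congr (fun m => ?_)
  have e : (((m + 1 : ℕ) : ℝ) + β + 1) = (m : ℝ) + (β + 1) + 1 := by push_cast; ring
  have hm : (0:ℝ) ≤ m := Nat.cast_nonneg m
  have hG : Real.Gamma ((m : ℝ) + (β + 1) + 1) ≠ 0 :=
    (Real.Gamma_pos_of_pos (by linarith)).ne'
  rw [e, Nat.factorial_succ]
  have h1 : (m.factorial : ℝ) ≠ 0 := by positivity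
  have h2 : (m : ℝ) + 1 ≠ 0 := by positivity
  push_cast
  simp only [Nat.add_sub_cancel, pow_succ]
  field_simp

lemma bF_rec (β : ℝ) (hβ : -1 < β) (t : ℝ) :
    t * bF (β + 1 + 1) t = (β + 1) * bF (β + 1) t - bF β t := by
  have s0 := bF_summable β hβ t
  have s1 := bF_summable (β + 1) (by linarith) t
  have s2 := bF_summable (β + 1 + 1) (by linarith) t
  have e2 : t * bF (β + 1 + 1) t = ∑' m : ℕ, (-(m : ℝ)) *
      (((-1 : ℝ) ^ m / (m.factorial * Real.Gamma ((m : ℝ) + (β + 1) + 1))) * t ^ m) := by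
    have hterm : ∀ m : ℕ, t * (((-1 : ℝ) ^ m / (m.factorial *
        Real.Gamma ((m : ℝ) + (β + 1 + 1) + 1))) * t ^ m) = (-((m + 1 : ℕ) : ℝ)) *
      (((-1 : ℝ) ^ (m + 1) / ((m + 1).factorial *
        Real.Gamma (((m + 1 : ℕ) : ℝ) + (β + 1) + 1))) * t ^ (m + 1)) := by
      intro m
      have e : (((m + 1 : ℕ) : ℝ) + (β + 1) + 1) = (m : ℝ) + (β + 1 + 1) + 1 := by
        push_cast; ring
      have hm : (0:ℝ) ≤ m := Nat.cast_nonneg m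
      have hG : Real.Gamma ((m : ℝ) + (β + 1 + 1) + 1) ≠ 0 :=
        (Real.Gamma_pos_of_pos (by linarith)).ne'
      rw [e, Nat.factorial_succ]
      have h1 : (m.factorial : ℝ) ≠ 0 := by positivity
      have h2 : (m : ℝ) + 1 ≠ 0 := by positivity
      push_cast
      simp only [pow_succ]
      field_simp
    have hs : Summable (fun m : ℕ => (-(m : ℝ)) *
      (((-1 : ℝ) ^ m / (m.factorial * Real.Gamma ((m : ℝ) + (β + 1) + 1))) * t ^ m)) := by
      rw [← summable_nat_add_iff 1]
      exact (s2.mul_left t).congr hterm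
    rw [hs.tsum_eq_zero_add, bF, ← tsum_mul_left]
    simp only [Nat.cast_zero, neg_zero, zero_mul, zero_add]
    exact tsum_congr hterm
  rw [e2, bF, bF, ← tsum_mul_left, ← (s1.mul_left (β + 1)).tsum_sub s0]
  refine tsum_congr (fun m => ?_)
  have hm : (0:ℝ) ≤ m := Nat.cast_nonneg m
  have hp : (m : ℝ) + β + 1 ≠ 0 := by linarith
  have e : (m : ℝ) + (β + 1) + 1 = (m + β + 1) + 1 := by ring
  have hG : Real.Gamma ((m : ℝ) + β + 1) ≠ 0 :=
    (Real.Gamma_pos_of_pos (by linarith)).ne'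
  rw [e, Real.Gamma_add_one hp]
  have h1 : (m.factorial : ℝ) ≠ 0 := by positivity
  field_simp
  ring

lemma besselJ_eq (α : ℝ) {x : ℝ} (hx : 0 < x) :
    besselJ α x = (x / 2) ^ α * bF α (x ^ 2 / 4) := by
  rw [besselJ, bF, ← tsum_mul_left]
  refine tsum_congr (fun m => ?_)
  rw [Real.rpow_add (by positivity), show (2 * (m : ℝ)) = ((2 * m : ℕ) : ℝ) by push_cast; ring,
    Real.rpow_natCast, pow_mul, show (x / 2) ^ 2 = x ^ 2 / 4 by ring]
  ring

lemma bF_comp_deriv (β : ℝ) (hβ : -1 < β) (x : ℝ) :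
    HasDerivAt (fun x : ℝ => bF β (x ^ 2 / 4)) (-(x / 2) * bF (β + 1) (x ^ 2 / 4)) x := by
  have h1 : HasDerivAt (fun x : ℝ => x ^ 2 / 4) (x / 2) x := by
    refine ((hasDerivAt_pow 2 x).div_const 4).congr_deriv ?_
    simp; ring
  refine ((bF_hasDerivAt β hβ (x ^ 2 / 4)).comp x h1).congr_deriv ?_
  ring

lemma bF_comp_cont (β : ℝ) (hβ : -1 < β) : Continuous (fun x : ℝ => bF β (x ^ 2 / 4)) :=
  continuous_iff_continuousAt.2 fun x => (bF_comp_deriv β hβ x).continuousAt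

/-- boundedness of `√x J_α(x)` on `[1,∞)` by the energy method. -/
lemma energy_bound (α : ℝ) (hα : -1 < α) :
    ∃ M > (0:ℝ), ∀ x : ℝ, 1 ≤ x → |x ^ (α + 1 / 2) * bF α (x ^ 2 / 4)| ≤ M := by
  set u : ℝ → ℝ := fun x => x ^ (α + 1 / 2) * bF α (x ^ 2 / 4) with hu
  set v : ℝ → ℝ := fun x => x ^ (α + 1 / 2) *
    ((α + 1 / 2) / x * bF α (x ^ 2 / 4) - x / 2 * bF (α + 1) (x ^ 2 / 4)) with hv
  set c := |α ^ 2 - 1 / 4| with hc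
  have hpow : ∀ x : ℝ, 0 < x → HasDerivAt (fun x : ℝ => x ^ (α + 1 / 2))
      (x ^ (α + 1 / 2) * ((α + 1 / 2) / x)) x := by
    intro x hx
    refine (Real.hasDerivAt_rpow_const (Or.inl hx.ne')).congr_deriv ?_
    rw [Real.rpow_sub_one hx.ne']; ring
  have du : ∀ x : ℝ, 0 < x → HasDerivAt u (v x) x := by
    intro x hx
    refine ((hpow x hx).mul (bF_comp_deriv α hα x)).congr_deriv ?_
    simp only [hv]; ring
  have dv : ∀ x : ℝ, 0 < x → HasDerivAt v (((α ^ 2 - 1 / 4) / x ^ 2 - 1) * u x) x := by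
    intro x hx
    have hrec := bF_rec α hα (x ^ 2 / 4)
    have hinv : HasDerivAt (fun x : ℝ => (α + 1 / 2) / x) (-(α + 1 / 2) / x ^ 2) x := by
      refine ((hasDerivAt_inv hx.ne').const_mul (α + 1 / 2)).congr_deriv ?_
      ring
    have hx2 : HasDerivAt (fun x : ℝ => x / 2) (1 / 2) x := (hasDerivAt_id x).div_const 2
    refine ((hpow x hx).mul ((hinv.mul (bF_comp_deriv α hα x)).sub
      (hx2.mul (bF_comp_deriv (α + 1) (by linarith) x)))).congr_deriv ?_
    simp only [hu]
    have hrec' : bF α (x ^ 2 / 4) = (α + 1) * bF (α + 1) (x ^ 2 / 4)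
      - x ^ 2 / 4 * bF (α + 1 + 1) (x ^ 2 / 4) := by linarith
    simp only [Pi.mul_apply, Pi.sub_apply]
    rw [hrec']
    field_simp
    ring
  set W : ℝ → ℝ := fun x => (u x ^ 2 + v x ^ 2) * Real.exp (c / x) with hW
  have dW : ∀ x : ℝ, 0 < x → HasDerivAt W
      ((2 * u x * v x * ((α ^ 2 - 1 / 4) / x ^ 2) - c / x ^ 2 * (u x ^ 2 + v x ^ 2))
        * Real.exp (c / x)) x := by
    intro x hx
    have hinv : HasDerivAt (fun x : ℝ => c / x) (-c / x ^ 2) x := by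
      refine ((hasDerivAt_inv hx.ne').const_mul c).congr_deriv ?_
      ring
    refine ((((du x hx).pow 2).add ((dv x hx).pow 2)).mul hinv.exp).congr_deriv ?_
    simp only [Pi.add_apply, Pi.pow_apply]
    push_cast
    ring
  have anti : AntitoneOn W (Ici 1) := by
    apply antitoneOn_of_deriv_nonpos (convex_Ici 1)
    · intro x hx
      exact (dW x (lt_of_lt_of_le one_pos hx)).continuousAt.continuousWithinAt
    · intro x hx
      rw [interior_Ici] at hx
      exact (dW x (one_pos.trans hx)).differentiableAt.differentiableWithinAt
    · intro x hx
      rw [interior_Ici] at hx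
      have hx0 : 0 < x := one_pos.trans hx
      rw [(dW x hx0).deriv]
      apply mul_nonpos_of_nonpos_of_nonneg _ (Real.exp_pos _).le
      have h1 : 2 * u x * v x * (α ^ 2 - 1 / 4) ≤ c * (u x ^ 2 + v x ^ 2) := by
        calc _ ≤ |2 * u x * v x * (α ^ 2 - 1 / 4)| := le_abs_self _
          _ = |2 * u x * v x| * c := by rw [abs_mul]
          _ ≤ (u x ^ 2 + v x ^ 2) * c := by
            gcongr
            exact abs_le.2 ⟨by nlinarith [sq_nonneg (u x + v x)],
              by nlinarith [sq_nonneg (u x - v x)]⟩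
          _ = _ := by ring
      have : 2 * u x * v x * ((α ^ 2 - 1 / 4) / x ^ 2) - c / x ^ 2 * (u x ^ 2 + v x ^ 2)
        = (2 * u x * v x * (α ^ 2 - 1 / 4) - c * (u x ^ 2 + v x ^ 2)) / x ^ 2 := by ring
      rw [this]
      exact div_nonpos_of_nonpos_of_nonneg (by linarith) (by positivity)
  refine ⟨Real.sqrt (W 1) + 1, by positivity, fun x hx => ?_⟩
  have h1 : W x ≤ W 1 := anti (mem_Ici.2 le_rfl) hx hx
  have h2 : u x ^ 2 ≤ W x := by
    have : 1 ≤ Real.exp (c / x) := Real.one_le_exp (by positivity)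
    simp only [hW]
    nlinarith [sq_nonneg (u x), sq_nonneg (v x)]
  have h3 : |u x| ≤ Real.sqrt (W 1) := Real.abs_le_sqrt (h2.trans h1)
  change |u x| ≤ _
  linarith

lemma besselJ_small (α : ℝ) (hα : -1 < α) :
    ∃ M > (0:ℝ), ∀ x : ℝ, 0 < x → x ≤ 1 → |besselJ α x| ≤ M * x ^ α := by
  obtain ⟨B, hB⟩ := (isCompact_Icc (a := (0:ℝ)) (b := 1)).exists_bound_of_continuousOn
    (bF_comp_cont α hα).continuousOn
  refine ⟨(1 / 2) ^ α * (|B| + 1), by positivity, fun x hx hx1 => ?_⟩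
  rw [besselJ_eq α hx, abs_mul, abs_of_pos (by positivity),
    show x / 2 = x * (1 / 2) by ring, Real.mul_rpow hx.le (by norm_num)]
  have := hB x ⟨hx.le, hx1⟩
  rw [Real.norm_eq_abs] at this
  have h2 := le_abs_self B
  calc _ ≤ x ^ α * (1 / 2) ^ α * (|B| + 1) := by gcongr; linarith
    _ = _ := by ring

lemma besselJ_large (α : ℝ) (hα : -1 < α) :
    ∃ M > (0:ℝ), ∀ x : ℝ, 1 ≤ x → |besselJ α x| ≤ M * x ^ (-(1:ℝ)/2) := by
  obtain ⟨M, hM, h⟩ := energy_bound α hα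
  refine ⟨(1 / 2) ^ α * M, by positivity, fun x hx => ?_⟩
  have hx0 : 0 < x := by linarith
  have e : besselJ α x = (1 / 2) ^ α * x ^ (-(1:ℝ)/2) *
      (x ^ (α + 1 / 2) * bF α (x ^ 2 / 4)) := by
    rw [besselJ_eq α hx0, show x / 2 = x * (1 / 2) by ring, Real.mul_rpow hx0.le (by norm_num)]
    have : x ^ α = x ^ (-(1:ℝ)/2) * x ^ (α + 1 / 2) := by
      rw [← Real.rpow_add hx0]; congr 1; ring
    rw [this]; ring
  rw [e, abs_mul, abs_of_pos (by positivity)]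
  calc _ ≤ (1 / 2) ^ α * x ^ (-(1:ℝ)/2) * M := by gcongr; exact h x hx
    _ = _ := by ring

lemma besselJ_all (α : ℝ) (hα : -1 < α) :
    ∃ M > (0:ℝ), ∀ x : ℝ, 0 < x → |besselJ α x| ≤ M * (x ^ (-(1:ℝ)/2) + x ^ (-(1:ℝ))) := by
  obtain ⟨M1, h1, hs⟩ := besselJ_small α hα
  obtain ⟨M2, h2, hl⟩ := besselJ_large α hα
  refine ⟨M1 + M2, by positivity, fun x hx => ?_⟩
  have p1 : 0 < x ^ (-(1:ℝ)/2) := by positivity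
  have p2 : 0 < x ^ (-(1:ℝ)) := by positivity
  rcases le_total x 1 with hx1 | hx1
  · have : x ^ α ≤ x ^ (-(1:ℝ)) := Real.rpow_le_rpow_of_exponent_ge hx hx1 hα.le
    have := hs x hx hx1
    nlinarith [mul_pos h2 p1, mul_pos h2 p2, mul_pos h1 p1]
  · have := hl x hx1
    nlinarith [mul_pos h1 p1, mul_pos h2 p2, mul_pos h1 p2]

lemma besselJ_ratio (α : ℝ) (hα : -1 < α) (ξ₀ : ℝ) (h0 : 0 < ξ₀) (hξ₀ : ξ₀ < besselJZero α) :
    ∃ C > (0:ℝ), ∀ ξ : ℝ, 0 < ξ → ξ < ξ₀ → 0 < |besselJ α ξ| ∧ ∀ ρ ∈ Ioc (0:ℝ) 1,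
      |besselJ α (Real.sqrt (ρ * ξ ^ 2))| ≤ C * ρ ^ (α / 2) * |besselJ α ξ| := by
  have hne : ∀ x ∈ Icc (0:ℝ) ξ₀, bF α (x ^ 2 / 4) ≠ 0 := by
    intro x hx h
    rcases hx.1.eq_or_lt with h' | h'
    · subst h'
      rw [bF, tsum_eq_single 0 (fun m hm => by simp [hm])] at h
      have : Real.Gamma (α + 1) ≠ 0 := (Real.Gamma_pos_of_pos (by linarith)).ne'
      simp [this] at h
    · have : besselJZero α ≤ x := by
        apply csInf_le ⟨0, fun y hy => hy.1.le⟩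
        exact ⟨h', by rw [besselJ_eq α h', h, mul_zero]⟩
      linarith [hx.2]
  have hcont := bF_comp_cont α hα
  obtain ⟨B, hB⟩ := (isCompact_Icc (a := (0:ℝ)) (b := ξ₀)).exists_bound_of_continuousOn
    hcont.continuousOn
  obtain ⟨x₀, hx₀, hmin⟩ := (isCompact_Icc (a := (0:ℝ)) (b := ξ₀)).exists_isMinOn
    ⟨0, left_mem_Icc.2 h0.le⟩ hcont.abs.continuousOn
  set c := |bF α (x₀ ^ 2 / 4)| with hc
  have hcpos : 0 < c := abs_pos.2 (hne x₀ hx₀)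
  refine ⟨(|B| + 1) / c, by positivity, fun ξ hξ hξ' => ?_⟩
  have hJ : c * (ξ / 2) ^ α ≤ |besselJ α ξ| := by
    rw [besselJ_eq α hξ, abs_mul, abs_of_pos (a := (ξ / 2) ^ α) (by positivity), mul_comm]
    gcongr
    exact hmin ⟨hξ.le, hξ'.le⟩
  refine ⟨lt_of_lt_of_le (by positivity) hJ, fun ρ hρ => ?_⟩
  have hρ0 : 0 < ρ := hρ.1
  have hs0 : 0 < Real.sqrt ρ := Real.sqrt_pos.2 hρ0
  have hs1 : Real.sqrt ρ ≤ 1 := Real.sqrt_le_one.2 hρ.2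
  rw [Real.sqrt_mul hρ0.le, Real.sqrt_sq hξ.le, besselJ_eq α (by positivity), abs_mul,
    abs_of_pos (by positivity), mul_div_assoc, Real.mul_rpow hs0.le (by positivity)]
  have e : Real.sqrt ρ ^ α = ρ ^ (α / 2) := by
    rw [Real.sqrt_eq_rpow, ← Real.rpow_mul hρ0.le]; congr 1; ring
  rw [e]
  have hb := hB (Real.sqrt ρ * ξ) ⟨by positivity, by nlinarith⟩
  rw [Real.norm_eq_abs] at hb
  have h2 := le_abs_self B
  calc _ ≤ ρ ^ (α / 2) * (ξ / 2) ^ α * (|B| + 1) := by gcongr; linarith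
    _ = (|B| + 1) / c * ρ ^ (α / 2) * (c * (ξ / 2) ^ α) := by field_simp
    _ ≤ _ := by gcongr

lemma sqrt_mul_rpow (s : ℝ) {ρ mu : ℝ} (hρ : 0 < ρ) (hmu : 0 < mu) :
    Real.sqrt (ρ * mu) ^ s = ρ ^ (s / 2) * mu ^ (s / 2) := by
  rw [Real.sqrt_eq_rpow, ← Real.rpow_mul (by positivity), Real.mul_rpow hρ.le hmu.le,
    show 1 / 2 * s = s / 2 by ring]

lemma kernel_bound (α mu ξ C D : ℝ) (g : ℝ → ℝ) (hC : 0 < C)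
    (hJ : 0 < |besselJ α ξ|)
    (h1 : ∀ ρ ∈ Ioc (0:ℝ) 1,
      |besselJ α (Real.sqrt (ρ * ξ ^ 2))| ≤ C * ρ ^ (α / 2) * |besselJ α ξ|)
    (h2 : ∀ ρ ∈ Ioc (0:ℝ) 1, |besselJ α (Real.sqrt (ρ * mu))| * ρ ^ (α / 2) ≤ D * g ρ)
    (hg : IntervalIntegrable g volume 0 1) :
    |besselKernel α mu (ξ ^ 2) / besselJ α ξ| ≤ C * D * ∫ ρ in (0:ℝ)..1, g ρ := by
  rw [abs_div, div_le_iff₀ hJ, besselKernel, abs_mul]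
  have := intervalIntegral.norm_integral_le_of_norm_le (μ := volume) (a := (0:ℝ)) (b := 1)
    (f := fun ρ => besselJ α (Real.sqrt (ρ * mu)) * besselJ α (Real.sqrt (ρ * ξ ^ 2)))
    (g := fun ρ => (C * D * |besselJ α ξ|) * g ρ) zero_le_one
    (Filter.Eventually.of_forall fun ρ hρ => by
      rw [Real.norm_eq_abs, abs_mul]
      calc _ ≤ |besselJ α (Real.sqrt (ρ * mu))| * (C * ρ ^ (α / 2) * |besselJ α ξ|) := by
            gcongr; exact h1 ρ hρ
        _ = C * |besselJ α ξ| * (|besselJ α (Real.sqrt (ρ * mu))| * ρ ^ (α / 2)) := by ring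
        _ ≤ C * |besselJ α ξ| * (D * g ρ) :=
            mul_le_mul_of_nonneg_left (h2 ρ hρ) (by positivity)
        _ = _ := by ring)
    (hg.const_mul _)
  rw [intervalIntegral.integral_const_mul, Real.norm_eq_abs] at this
  rw [abs_of_pos (by norm_num : (0:ℝ) < 1 / 4)]
  have h0 := abs_nonneg (∫ ρ in (0:ℝ)..1,
    besselJ α (Real.sqrt (ρ * mu)) * besselJ α (Real.sqrt (ρ * ξ ^ 2)))
  linarith

/-- Fix `α > -1` and `ξ₀ < min(j_α, j_{α+1})`. Uniformly for `0 < ξ < ξ₀`, the ratio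
`K_Be(μ, ξ²)/J_α(ξ)` is `O(μ^{α/2})` for `0 < μ ≤ 1` and `O(μ^{-1/4})` for `μ ≥ 1`. -/
theorem besselKernel_ratio_bound (α : ℝ) (hα : -1 < α) (ξ₀ : ℝ)
    (hξ₀ : ξ₀ < min (besselJZero α) (besselJZero (α + 1))) :
    ∃ C > (0:ℝ), ∀ ξ : ℝ, 0 < ξ → ξ < ξ₀ →
      (∀ mu ∈ Ioc (0:ℝ) 1,
        |besselKernel α mu (ξ ^ 2) / besselJ α ξ| ≤ C * mu ^ (α / 2)) ∧
      (∀ mu : ℝ, 1 ≤ mu →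
        |besselKernel α mu (ξ ^ 2) / besselJ α ξ| ≤ C * mu ^ (-(1:ℝ)/4)) := by
  rcases le_or_gt ξ₀ 0 with h0 | h0
  · exact ⟨1, one_pos, fun ξ h h' => by linarith⟩
  obtain ⟨C, hC, hr⟩ := besselJ_ratio α hα ξ₀ h0 (hξ₀.trans_le (min_le_left _ _))
  obtain ⟨M1, hM1, hs⟩ := besselJ_small α hα
  obtain ⟨M2, hM2, hl⟩ := besselJ_all α hα
  set I1 := ∫ ρ in (0:ℝ)..1, ρ ^ α with hI1
  set g2 : ℝ → ℝ := fun ρ => ρ ^ (α / 2 - 1 / 4) + ρ ^ (α / 2 - 1 / 2) with hg2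
  set I2 := ∫ ρ in (0:ℝ)..1, g2 ρ with hI2
  have i1 : IntervalIntegrable (fun ρ : ℝ => ρ ^ α) volume 0 1 :=
    intervalIntegral.intervalIntegrable_rpow' hα
  have i2 : IntervalIntegrable g2 volume 0 1 :=
    (intervalIntegral.intervalIntegrable_rpow' (by linarith)).add
      (intervalIntegral.intervalIntegrable_rpow' (by linarith))
  have n1 : 0 ≤ I1 := intervalIntegral.integral_nonneg zero_le_one
    (fun x hx => Real.rpow_nonneg hx.1 _)
  have n2 : 0 ≤ I2 := intervalIntegral.integral_nonneg zero_le_one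
    (fun x hx => add_nonneg (Real.rpow_nonneg hx.1 _) (Real.rpow_nonneg hx.1 _))
  refine ⟨C * M1 * I1 + C * M2 * I2 + 1, by positivity, fun ξ hξ hξ' => ?_⟩
  obtain ⟨hJ, hρ⟩ := hr ξ hξ hξ'
  refine ⟨fun mu hmu => ?_, fun mu hmu => ?_⟩
  · have hmu0 := hmu.1
    have := kernel_bound α mu ξ C (M1 * mu ^ (α / 2)) (fun ρ => ρ ^ α) hC hJ hρ
      (fun ρ hρ => by
        have hρ0 := hρ.1
        have hle : Real.sqrt (ρ * mu) ≤ 1 :=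
          Real.sqrt_le_one.2 (mul_le_one₀ hρ.2 hmu0.le hmu.2)
        have h := hs _ (Real.sqrt_pos.2 (mul_pos hρ0 hmu0)) hle
        rw [sqrt_mul_rpow α hρ0 hmu0] at h
        calc _ ≤ M1 * (ρ ^ (α / 2) * mu ^ (α / 2)) * ρ ^ (α / 2) := by gcongr
          _ = M1 * mu ^ (α / 2) * (ρ ^ (α / 2) * ρ ^ (α / 2)) := by ring
          _ = _ := by rw [← Real.rpow_add hρ0, add_halves]) i1
    refine this.trans ?_
    have hp : 0 < mu ^ (α / 2) := by positivity
    calc _ = (C * M1 * I1) * mu ^ (α / 2) := by ring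
      _ ≤ _ := by
        gcongr
        have : 0 ≤ C * M2 * I2 := by positivity
        linarith
  · have hmu0 : 0 < mu := by linarith
    have := kernel_bound α mu ξ C (M2 * mu ^ (-(1:ℝ)/4)) g2 hC hJ hρ
      (fun ρ hρ => by
        have hρ0 := hρ.1
        have h := hl _ (Real.sqrt_pos.2 (mul_pos hρ0 hmu0))
        rw [sqrt_mul_rpow _ hρ0 hmu0, sqrt_mul_rpow _ hρ0 hmu0,
          show -(1:ℝ) / 2 / 2 = -1 / 4 by norm_num] at h
        have hle : mu ^ (-(1:ℝ) / 2) ≤ mu ^ (-(1:ℝ)/4) :=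
          Real.rpow_le_rpow_of_exponent_le hmu (by norm_num)
        calc _ ≤ M2 * (ρ ^ (-(1:ℝ)/4) * mu ^ (-(1:ℝ)/4) + ρ ^ (-(1:ℝ)/2) * mu ^ (-(1:ℝ)/2))
                * ρ ^ (α / 2) := by gcongr
          _ ≤ M2 * (ρ ^ (-(1:ℝ)/4) * mu ^ (-(1:ℝ)/4) + ρ ^ (-(1:ℝ)/2) * mu ^ (-(1:ℝ)/4))
                * ρ ^ (α / 2) := by gcongr
          _ = M2 * mu ^ (-(1:ℝ)/4) * (ρ ^ (α / 2) * ρ ^ (-(1:ℝ)/4)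
                + ρ ^ (α / 2) * ρ ^ (-(1:ℝ)/2)) := by ring
          _ = _ := by
            rw [← Real.rpow_add hρ0, ← Real.rpow_add hρ0]
            simp only [hg2]
            congr 3 <;> ring_nf) i2
    refine this.trans ?_
    have hp : 0 < mu ^ (-(1:ℝ)/4) := by positivity
    calc _ = (C * M2 * I2) * mu ^ (-(1:ℝ)/4) := by ring
      _ ≤ _ := by
        gcongr
        have : 0 ≤ C * M1 * I1 := by positivity
        linarith
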